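/- Fix real numbers 0 < β₀ < β_w, and for θ > 0 define A(θ) = β₀·((β₀+θ)²/2 + (β_w+θ)³/(2(β₀+θ))), B(θ) = (3/2)(β₀ - β_w)(β₀ + β_w + θ) - β₀·(β₀ + θ + (β_w+θ)²/(β₀+θ)), C(θ) = 2(β_w - β₀) + β₀·(1 + (β_w+θ)/(β₀+θ)). Then: (i) every real root v of A(θ)v² + B(θ)v + C(θ) = 0 satisfies 0 < v ≤ -B(θ)/A(θ); and (ii) -B(θ)/A(θ) → 0 as θ → ∞. In particular, the roots of the quadratic tend to 0 as θ → ∞. -/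

import Mathlib

open Filter

/-- Coefficient A(θ) of the quadratic approximation (equation (26)). -/
noncomputable def coeffA (β₀ βw θ : ℝ) : ℝ :=
  β₀ * ((β₀ + θ) ^ 2 / 2 + (βw + θ) ^ 3 / (2 * (β₀ + θ)))

/-- Coefficient B(θ) of the quadratic approximation (equation (26)). -/
noncomputable def coeffB (β₀ βw θ : ℝ) : ℝ :=
  (3 / 2) * (β₀ - βw) * (β₀ + βw + θ) - β₀ * (β₀ + θ + (βw + θ) ^ 2 / (β₀ + θ))

/-- Coefficient C(θ) of the quadratic approximation (equation (26)). -/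
noncomputable def coeffC (β₀ βw θ : ℝ) : ℝ :=
  2 * (βw - β₀) + β₀ * (1 + (βw + θ) / (β₀ + θ))

/-- Lemma 1 of the paper: every root v of the quadratic A(θ)v² + B(θ)v + C(θ) satisfies
0 < v ≤ -B(θ)/A(θ), and -B(θ)/A(θ) → 0 as θ → ∞, so the roots (hence the optimal
threshold distance) tend to 0 as the SINR threshold grows. -/
theorem optimal_threshold_decreasing
    (β₀ βw : ℝ) (hβ₀ : 0 < β₀) (hβw : β₀ < βw) :
    (∀ θ : ℝ, 0 < θ → ∀ v : ℝ,
        coeffA β₀ βw θ * v ^ 2 + coeffB β₀ βw θ * v + coeffC β₀ βw θ = 0 →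
        0 < v ∧ v ≤ -coeffB β₀ βw θ / coeffA β₀ βw θ) ∧
    Tendsto (fun θ : ℝ => -coeffB β₀ βw θ / coeffA β₀ βw θ) atTop (nhds 0) := by
  have hA : ∀ θ : ℝ, 0 < θ → β₀ * θ ^ 2 / 2 ≤ coeffA β₀ βw θ := by
    intro θ hθ
    have hw : 0 < βw := hβ₀.trans hβw
    unfold coeffA
    have h1 : 0 < (βw + θ) ^ 3 / (2 * (β₀ + θ)) := by positivity
    have h2 : θ ^ 2 ≤ (β₀ + θ) ^ 2 := by nlinarith
    rw [mul_div_assoc]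
    apply mul_le_mul_of_nonneg_left _ hβ₀.le
    linarith
  have hApos : ∀ θ : ℝ, 0 < θ → 0 < coeffA β₀ βw θ := fun θ hθ =>
    lt_of_lt_of_le (by positivity) (hA θ hθ)
  have hB : ∀ θ : ℝ, 0 < θ → coeffB β₀ βw θ < 0 := by
    intro θ hθ
    have hw : 0 < βw := hβ₀.trans hβw
    unfold coeffB
    have h1 : 0 < β₀ * (β₀ + θ + (βw + θ) ^ 2 / (β₀ + θ)) := by positivity
    have h2 : 0 < (βw - β₀) * (β₀ + βw + θ) := mul_pos (by linarith) (by positivity)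
    linarith
  have hC : ∀ θ : ℝ, 0 < θ → 0 < coeffC β₀ βw θ := by
    intro θ hθ
    have hw : 0 < βw := hβ₀.trans hβw
    unfold coeffC
    have h1 : 0 < β₀ * (1 + (βw + θ) / (β₀ + θ)) := by positivity
    linarith
  refine ⟨?_, ?_⟩
  · intro θ hθ v hv
    have a := hApos θ hθ
    have b := hB θ hθ
    have c := hC θ hθ
    have hv0 : 0 < v := by
      by_contra h
      have h1 : 0 ≤ coeffB β₀ βw θ * v := mul_nonneg_of_nonpos_of_nonpos b.le (not_lt.mp h)
      have h2 : 0 ≤ coeffA β₀ βw θ * v ^ 2 := by positivity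
      linarith
    refine ⟨hv0, ?_⟩
    rw [le_div_iff₀ a]
    by_contra h
    have h1 : 0 < (v * coeffA β₀ βw θ + coeffB β₀ βw θ) * v :=
      mul_pos (by linarith) hv0
    nlinarith
  · have hlim : Tendsto (fun θ : ℝ => (2 * (9 / 2 * (βw - β₀) + 6 * β₀) / β₀) / θ) atTop (nhds 0) :=
      tendsto_const_nhds.div_atTop tendsto_id
    refine tendsto_of_tendsto_of_tendsto_of_le_of_le' tendsto_const_nhds hlim ?_ ?_
    · filter_upwards [eventually_gt_atTop 0] with θ hθ
      exact div_nonneg (by linarith [hB θ hθ]) (hApos θ hθ).le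
    · filter_upwards [eventually_ge_atTop βw] with θ hθw
      have hw : 0 < βw := hβ₀.trans hβw
      have hθ : 0 < θ := hw.trans_le hθw
      have hq : (βw + θ) ^ 2 / (β₀ + θ) ≤ 4 * θ := by
        rw [div_le_iff₀ (by positivity)]
        nlinarith [mul_pos hβ₀ hθ]
      have hBle : -coeffB β₀ βw θ ≤ (9 / 2 * (βw - β₀) + 6 * β₀) * θ := by
        unfold coeffB
        have h1 : β₀ * (β₀ + θ + (βw + θ) ^ 2 / (β₀ + θ)) ≤ β₀ * (6 * θ) :=
          mul_le_mul_of_nonneg_left (by linarith) hβ₀.le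
        have h2 : (βw - β₀) * (β₀ + βw + θ) ≤ (βw - β₀) * (3 * θ) :=
          mul_le_mul_of_nonneg_left (by linarith) (by linarith)
        linarith
      have hK : 0 ≤ (9 / 2 * (βw - β₀) + 6 * β₀) * θ :=
        mul_nonneg (by linarith) hθ.le
      calc -coeffB β₀ βw θ / coeffA β₀ βw θ
          ≤ ((9 / 2 * (βw - β₀) + 6 * β₀) * θ) / (β₀ * θ ^ 2 / 2) :=
            div_le_div₀ hK hBle (by positivity) (hA θ hθ)
        _ = _ := by field_simp
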